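/- arXiv:2408.14936 — 2 statements merged into one kernel-verified Lean document; each statement's English description precedes it below -/
import Mathlib

section
/- There exist rational functions L_1, …, L_p : ℂ → ℂ such that for every z ∈ ℂ with Q(z) ≠ 0 and f'(z) ≠ 0, and every x ∈ ℂ with x ∉ {0, 1, f(z)} ∪ {v_1, …, v_p}, one has Σ_{y ∈ ℂ : f(y) = x} ψ_z(y)/(f'(y))² = (1/f'(z))·ψ_{f(z)}(x) + Σ_{j=1}^p L_j(z)·ψ_{v_j}(x). -/
open MeasureTheory Filter Topology Set

noncomputable section
open Polynomial

/-- In a decomposition monoid, a divisor of a finite product splits into divisors of the factors. -/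
lemma Finset.exists_eq_mul_prod_of_dvd_mul_prod {α ι : Type*} [CommMonoid α]
    [DecompositionMonoid α] (s : Finset ι) (h : ι → α) {a q : α} (ha : a ∣ q * ∏ i ∈ s, h i) :
    ∃ (b : α) (w : ι → α), b ∣ q ∧ (∀ i ∈ s, w i ∣ h i) ∧ a = b * ∏ i ∈ s, w i := by
  classical
  induction s using Finset.induction_on generalizing a with
  | empty => exact ⟨a, h, by simpa using ha, by simp, by simp⟩
  | insert i s hi ih =>
    rw [Finset.prod_insert hi, mul_left_comm] at ha
    obtain ⟨b, c, hb, hc, rfl⟩ := exists_dvd_and_dvd_of_dvd_mul ha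
    obtain ⟨e, w, he, hw, rfl⟩ := ih hc
    refine ⟨e, Function.update w i b, he, fun j hj => ?_, ?_⟩
    · rcases Finset.mem_insert.1 hj with rfl | hj
      · simpa using hb
      · simpa [Function.update_of_ne (ne_of_mem_of_not_mem hj hi)] using hw j hj
    · rw [Finset.prod_insert hi, Function.update_self, mul_left_comm]
      congr 2
      exact Finset.prod_congr rfl fun j hj => by
        rw [Function.update_of_ne (ne_of_mem_of_not_mem hj hi)]

namespace Polynomial

/-- The order of vanishing of the Wronskian of `A` and `H` at a zero `c` of `H` with `A c ≠ 0` is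
at most that of `H`. -/
lemma pow_dvd_of_pow_dvd_wronskian {K : Type*} [Field K] [CharZero K] {A H : K[X]} {c : K} {k : ℕ}
    (hH : H.eval c = 0) (hA : A.eval c ≠ 0) (hk : (X - C c) ^ k ∣ wronskian A H) :
    (X - C c) ^ k ∣ H := by
  rcases eq_or_ne H 0 with rfl | hH0
  · exact dvd_zero _
  set m := H.rootMultiplicity c with hm
  have hm0 : 0 < m := (rootMultiplicity_pos hH0).2 hH
  by_cases hkm : k ≤ m
  · exact (pow_dvd_pow _ hkm).trans (pow_rootMultiplicity_dvd H c)
  exfalso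
  have hdW : (X - C c) ^ m ∣ wronskian A H := (pow_dvd_pow _ (by omega)).trans hk
  have hdH : (X - C c) ^ m ∣ A * derivative H := by
    have h : A * derivative H = wronskian A H + derivative A * H := by
      rw [wronskian]; ring
    rw [h]
    exact dvd_add hdW ((pow_rootMultiplicity_dvd H c).mul_left _)
  have hcop : IsCoprime ((X - C c) ^ m) A := by
    refine IsCoprime.pow_left ((irreducible_X_sub_C c).coprime_iff_not_dvd.2 fun h => hA ?_)
    exact dvd_iff_isRoot.1 h
  have hd : (X - C c) ^ m ∣ derivative H := hcop.dvd_of_dvd_mul_left hdH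
  have hH' : derivative H ≠ 0 := by
    intro h
    rw [derivative_eq_zero.1 h |> eq_C_of_natDegree_eq_zero] at hH hH0
    simp_all
  have := (le_rootMultiplicity_iff hH').2 hd
  rw [derivative_rootMultiplicity_of_root hH] at this
  omega

/-- Partial fraction expansion of `G / T` at a point, for `T` with simple roots. -/
lemma sum_roots_eval_div_eq {K : Type*} [Field K] [IsAlgClosed K] [DecidableEq K] {T G : K[X]}
    (hT : ∀ y ∈ T.roots, (derivative T).eval y ≠ 0) (hG : G.degree < T.degree) {z : K}
    (hz : T.eval z ≠ 0) :
    ∑ y ∈ T.roots.toFinset, G.eval y / ((z - y) * (derivative T).eval y) =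
      G.eval z / T.eval z := by
  have hT0 : T ≠ 0 := by rintro rfl; simp at hz
  have hnd : T.roots.Nodup := by
    refine Multiset.nodup_iff_count_le_one.2 fun a => ?_
    rw [count_roots]
    by_contra! h
    have h1 := ((one_lt_rootMultiplicity_iff_isRoot hT0).1 h)
    exact hT a ((mem_roots hT0).2 h1.1) h1.2
  have hval : T.roots.toFinset.val = T.roots := by
    rw [Multiset.toFinset_val, hnd.dedup]
  have hTn : T = C T.leadingCoeff * Lagrange.nodal T.roots.toFinset id := by
    conv_lhs => rw [(IsAlgClosed.splits T).eq_prod_roots]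
    rw [Lagrange.nodal_eq, Finset.prod, hval]
    rfl
  have hcard : (T.roots.toFinset.card : WithBot ℕ) = T.degree := by
    rw [Multiset.toFinset_card_of_nodup hnd, (IsAlgClosed.splits T).degree_eq_card_roots hT0]
  have hzs : ∀ y ∈ T.roots.toFinset, z ≠ id y := by
    rintro y hy rfl
    exact hz (isRoot_of_mem_roots (Multiset.mem_toFinset.1 hy))
  have hint := Lagrange.eq_interpolate (s := T.roots.toFinset) (v := id) (f := G)
    Function.injective_id.injOn (by rwa [hcard])
  have hGz := congrArg (eval z) hint
  rw [Lagrange.eval_interpolate_not_at_node _ hzs] at hGz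
  have hlc : T.leadingCoeff ≠ 0 := leadingCoeff_ne_zero.2 hT0
  have hTz : T.eval z = T.leadingCoeff * (Lagrange.nodal T.roots.toFinset id).eval z := by
    conv_lhs => rw [hTn, eval_mul, eval_C]
  have hnz : (Lagrange.nodal T.roots.toFinset id).eval z ≠ 0 := fun h =>
    hz (by rw [hTz, h, mul_zero])
  rw [hTz, hGz, mul_comm (T.leadingCoeff), mul_div_mul_left _ _ hnz, Finset.sum_div]
  refine Finset.sum_congr rfl fun y hy => ?_
  have hTy : (derivative T).eval y =
      T.leadingCoeff * (derivative (Lagrange.nodal T.roots.toFinset id)).eval y := by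
    conv_lhs => rw [hTn, derivative_C_mul, eval_mul, eval_C]
  rw [Lagrange.nodalWeight_eq_eval_derivative_nodal hy, hTy]
  simp only [id, div_eq_mul_inv, mul_inv]
  ring

/-- Division with prescribed residue: if `A` is invertible modulo `W`, then every `R` is congruent
to a multiple `D * A` with `D` of degree smaller than `W`. -/
lemma exists_degree_lt_and_dvd_mul_sub {K : Type*} [Field K] {A W : K[X]} (h : IsCoprime A W)
    (hW : W ≠ 0) (R : K[X]) : ∃ D : K[X], D.degree < W.degree ∧ W ∣ D * A - R := by
  obtain ⟨a, b, hab⟩ := h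
  refine ⟨(R * a) % W, degree_mod_lt _ hW, -((R * a) / W * A) - R * b, ?_⟩
  have h1 := EuclideanDomain.div_add_mod (R * a) W
  linear_combination A * h1 + R * hab

/-- The Wronskian of two coprime polynomials divides the product of the denominator and of the
fibre polynomials over the critical values. -/
lemma wronskian_dvd_mul_prod {K ι : Type*} [Field K] [CharZero K] [IsAlgClosed K] [Fintype ι]
    {P Q : K[X]} (hPQ : IsCoprime P Q) (hdeg : Q.degree < P.degree) (hQ : Q ≠ 0)
    (hW : wronskian Q P ≠ 0) (v : ι → K)
    (hv : ∀ c, Q.eval c ≠ 0 → (wronskian Q P).eval c = 0 → ∃ j, P.eval c = v j * Q.eval c) :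
    wronskian Q P ∣ Q * ∏ j, (P - C (v j) * Q) := by
  classical
  have hH : ∀ w : K, P - C w * Q ≠ 0 := by
    intro w h
    have h1 : P.degree ≤ Q.degree := by
      rw [sub_eq_zero.1 h, ← smul_eq_C_mul]
      exact degree_smul_le _ _
    exact absurd hdeg h1.not_gt
  have h0 : Q * ∏ j, (P - C (v j) * Q) ≠ 0 :=
    mul_ne_zero hQ (Finset.prod_ne_zero_iff.2 fun j _ => hH _)
  rw [IsAlgClosed.dvd_iff_roots_le_roots hW h0, Multiset.le_iff_count]
  intro c
  rw [count_roots, count_roots, le_rootMultiplicity_iff h0]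
  have hk := pow_rootMultiplicity_dvd (wronskian Q P) c
  by_cases hWc : (wronskian Q P).eval c = 0
  · by_cases hQc : Q.eval c = 0
    · refine dvd_mul_of_dvd_left (pow_dvd_of_pow_dvd_wronskian (A := P) hQc ?_ ?_) _
      · intro hPc
        obtain ⟨a, b, hab⟩ := hPQ
        simpa [hPc, hQc] using congrArg (eval c) hab
      · rw [← wronskian_neg_eq Q P]
        exact dvd_neg.2 hk
    · obtain ⟨j, hj⟩ := hv c hQc hWc
      refine dvd_mul_of_dvd_right (Dvd.dvd.trans ?_ (Finset.dvd_prod_of_mem _ (Finset.mem_univ j))) _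
      refine pow_dvd_of_pow_dvd_wronskian (A := Q) (by simp [hj]) hQc ?_
      have h : wronskian Q (P - C (v j) * Q) = wronskian Q P := by
        simp only [wronskian, derivative_sub, derivative_C_mul]
        ring
      rwa [h]
  · rw [rootMultiplicity_eq_zero hWc, pow_zero]
    exact one_dvd _

/-- The Wronskian of polynomials of degrees `n` and `n + 1` has degree `2 n`. -/
lemma degree_wronskian_of_natDegree_eq_succ {K : Type*} [Field K] {P Q : K[X]}
    (hdeg : P.natDegree = Q.natDegree + 1) (hQ : Q ≠ 0) :
    (wronskian Q P).degree = (2 * Q.natDegree : ℕ) := by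
  set n := Q.natDegree with hn
  have hP' : (derivative P).natDegree ≤ n := (natDegree_derivative_le P).trans (by omega)
  have hc1 : (Q * derivative P).coeff (n + n) = Q.coeff n * (derivative P).coeff n :=
    coeff_mul_add_eq_of_natDegree_le hn.ge hP'
  have hc2 : (derivative Q * P).coeff (n + n) = n * (Q.coeff n * P.coeff (n + 1)) := by
    rcases Nat.eq_zero_or_pos n with h | h
    · have : derivative Q = 0 := derivative_of_natDegree_zero (by omega)
      simp [this, h]
    · have := coeff_mul_add_eq_of_natDegree_le (f := derivative Q) (g := P) (df := n - 1) (dg := n + 1)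
        (natDegree_derivative_le Q) hdeg.le
      rw [show n - 1 + (n + 1) = n + n by omega, coeff_derivative,
        show n - 1 + 1 = n by omega] at this
      rw [this]
      have : ((n - 1 : ℕ) : K) + 1 = n := by
        rw [← Nat.cast_succ]; congr 1; omega
      rw [this]; ring
  have hcoeff : (wronskian Q P).coeff (2 * n) = Q.coeff n * P.coeff (n + 1) := by
    rw [wronskian, coeff_sub, two_mul, hc1, hc2, coeff_derivative]
    ring
  have hne : (wronskian Q P).coeff (2 * n) ≠ 0 := by
    rw [hcoeff]
    refine mul_ne_zero (leadingCoeff_ne_zero.2 hQ) ?_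
    rw [← hdeg]
    refine leadingCoeff_ne_zero.2 ?_
    rintro rfl
    simp at hdeg
  refine degree_eq_of_le_of_coeff_ne_zero (natDegree_le_iff_degree_le.1 ?_) hne
  refine (natDegree_sub_le _ _).trans (max_le ?_ ?_)
  · exact natDegree_mul_le.trans (by omega)
  · rcases Nat.eq_zero_or_pos n with h | h
    · simp [derivative_of_natDegree_zero (show Q.natDegree = 0 by omega)]
    · have := natDegree_derivative_le Q
      exact natDegree_mul_le.trans (by omega)


/-- Partial fraction decomposition of `S * Q / W`, where `W` is the Wronskian of `Q` and `P` and
`S = P * (P - Q) / (X * (X - 1))`, along the fibres of `P / Q` over its critical values. -/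
lemma exists_partialFraction_wronskian {K ι : Type*} [Field K] [CharZero K] [IsAlgClosed K]
    [Fintype ι] {P Q : K[X]} (hPQ : IsCoprime P Q) (hdeg : P.natDegree = Q.natDegree + 1)
    (h0 : P.eval 0 = 0) (h1 : P.eval 1 = Q.eval 1)
    (hW0 : (wronskian Q P).eval 0 ≠ 0) (hW1 : (wronskian Q P).eval 1 ≠ 0)
    {v : ι → K} (hinj : Function.Injective v)
    (hv : ∀ c, Q.eval c ≠ 0 → (wronskian Q P).eval c = 0 → ∃ j, P.eval c = v j * Q.eval c) :
    ∃ (S E : K[X]) (w U H D : ι → K[X]),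
      X * (X - 1) * S = P * (P - Q) ∧
      (∀ j, w j * U j = wronskian Q P) ∧ (∀ j, w j * H j = P - C (v j) * Q) ∧
      E.degree < P.degree ∧ (∀ j, (D j * H j).degree < P.degree) ∧
      S * Q = E * wronskian Q P + ∑ j, C (v j * (v j - 1)) * D j * Q * U j := by
  classical
  have hW : wronskian Q P ≠ 0 := fun h => hW0 (by simp [h])
  have hQ : Q ≠ 0 := by rintro rfl; simp at hW
  have hP : P ≠ 0 := by rintro rfl; simp at hW
  have hdP : P.degree = (Q.natDegree + 1 : ℕ) := by rw [degree_eq_natDegree hP, hdeg]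
  have hQP : Q.degree < P.degree := by
    rw [hdP, degree_eq_natDegree hQ]
    exact_mod_cast Nat.lt_succ_self _
  have hdH : ∀ j, (P - C (v j) * Q).degree = P.degree := fun j => by
    refine degree_sub_eq_left_of_degree_lt (lt_of_le_of_lt ?_ hQP)
    rw [← smul_eq_C_mul]
    exact degree_smul_le _ _
  obtain ⟨b, w, ⟨q, hq⟩, hw, hWprod⟩ := Finset.univ.exists_eq_mul_prod_of_dvd_mul_prod _
    (wronskian_dvd_mul_prod hPQ hQP hQ hW v hv)
  choose H hH using fun j => hw j (Finset.mem_univ j)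
  set V : ι → K[X] := fun j => ∏ i ∈ Finset.univ.erase j, w i
  have hVw : ∀ j, w j * V j = ∏ i, w i := fun j => Finset.mul_prod_erase _ _ (Finset.mem_univ j)
  have hWU : ∀ j, w j * (b * V j) = wronskian Q P := fun j => by
    rw [mul_left_comm, hVw, hWprod]
  have hw0 : ∀ j, w j ≠ 0 := fun j h => hW (by rw [← hWU j, h, zero_mul])
  have hQH : ∀ j, IsCoprime Q (P - C (v j) * Q) := fun j => by
    have := hPQ.symm.add_mul_left_right (-C (v j))
    rwa [show P + Q * -C (v j) = P - C (v j) * Q by ring] at this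
  have hcopQ : ∀ j, IsCoprime Q (w j) := fun j =>
    (hQH j).of_isCoprime_of_dvd_right (hw j (Finset.mem_univ j))
  have hcop : ∀ i j, i ≠ j → IsCoprime (w i) (w j) := fun i j hij => by
    refine IsCoprime.of_isCoprime_of_dvd_left ?_ (hw i (Finset.mem_univ i))
    refine IsCoprime.of_isCoprime_of_dvd_right ?_ (hw j (Finset.mem_univ j))
    have hu : IsUnit (C (v i - v j)) := isUnit_C.2 (sub_ne_zero.2 (hinj.ne hij)).isUnit
    have h := ((isCoprime_mul_unit_left_left hu _ _).2 (hQH i)).symm.add_mul_left_right 1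
    rwa [show C (v i - v j) * Q + (P - C (v i) * Q) * 1 = P - C (v j) * Q by
      rw [C_sub]; ring] at h
  have hlin : ∀ (a : K) (j : ι), (wronskian Q P).eval a ≠ 0 → IsCoprime (X - C a) (w j) := by
    intro a j ha
    refine (irreducible_X_sub_C a).coprime_iff_not_dvd.2 fun h => ha ?_
    exact dvd_iff_isRoot.1 (h.trans ⟨_, (hWU j).symm⟩)
  have hXX : ∀ j, IsCoprime (X * (X - 1)) (w j) := fun j => by
    have e0 := hlin 0 j hW0
    have e1 := hlin 1 j hW1
    rw [C_0, sub_zero] at e0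
    rw [C_1] at e1
    exact e0.mul_left e1
  obtain ⟨S, hS⟩ : X * (X - 1) ∣ P * (P - Q) := by
    refine mul_dvd_mul (X_dvd_iff.2 (by rw [coeff_zero_eq_eval_zero, h0])) ?_
    rw [← C_1, dvd_iff_isRoot]
    simp [h1]
  have hA : ∀ j, IsCoprime (X * (X - 1) * (b * V j)) (w j) := fun j => by
    refine (hXX j).mul_left (IsCoprime.mul_left ?_ ?_)
    · exact (hcopQ j).of_isCoprime_of_dvd_left ⟨q, hq⟩
    · exact IsCoprime.prod_left fun i hi => hcop i j (Finset.ne_of_mem_erase hi)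
  choose D hDdeg hD using fun j => exists_degree_lt_and_dvd_mul_sub (hA j) (hw0 j) (Q * Q)
  have hkey : ∏ j, w j ∣ S * q - ∑ j, C (v j * (v j - 1)) * D j * Q * V j := by
    refine Finset.prod_dvd_of_coprime (fun i _ j _ hij => hcop i j hij) fun j _ => ?_
    have hsplit := Finset.add_sum_erase Finset.univ
      (fun j => C (v j * (v j - 1)) * D j * Q * V j) (Finset.mem_univ j)
    rw [← hsplit, ← sub_sub]
    refine dvd_sub ?_ (Finset.dvd_sum fun i hi => dvd_mul_of_dvd_right ?_ _)
    · refine (hXX j).symm.dvd_of_dvd_mul_left ?_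
      obtain ⟨g, hg⟩ := hD j
      refine ⟨q * (H j * (P - Q + C (v j) * Q) - C (v j * (v j - 1)) * g), ?_⟩
      simp only [C_mul, C_sub, C_1]
      linear_combination (-q) * hS + q * (P - Q + C (v j) * Q) * hH j -
        C (v j) * (C (v j) - 1) * q * hg - X * (X - 1) * C (v j) * (C (v j) - 1) * D j * V j * hq
    · exact Finset.dvd_prod_of_mem _
        (Finset.mem_erase.2 ⟨(Finset.ne_of_mem_erase hi).symm, Finset.mem_univ j⟩)
  obtain ⟨E, hE⟩ := hkey
  have hSQ : S * Q = E * wronskian Q P + ∑ j, C (v j * (v j - 1)) * D j * Q * (b * V j) := by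
    have : ∑ j, C (v j * (v j - 1)) * D j * Q * (b * V j) =
        b * ∑ j, C (v j * (v j - 1)) * D j * Q * V j := by
      rw [Finset.mul_sum]
      exact Finset.sum_congr rfl fun j _ => by ring
    rw [this, hWprod]
    linear_combination b * hE + S * hq
  refine ⟨S, E, w, fun j => b * V j, H, D, hS.symm, hWU, fun j => (hH j).symm, ?_, fun j => ?_, hSQ⟩
  · have hEW : (E * wronskian Q P).degree < P.degree + (wronskian Q P).degree := by
      rw [eq_sub_of_add_eq hSQ.symm]
      refine (degree_sub_le _ _).trans_lt (max_lt ?_ ?_)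
      · have hSn : S.natDegree + 2 ≤ 2 * (Q.natDegree + 1) := by
          rcases eq_or_ne S 0 with rfl | hS0
          · simp only [natDegree_zero]; omega
          have hX : ((X * (X - 1) : K[X])).natDegree = 2 := by
            rw [← C_1, natDegree_mul X_ne_zero (X_sub_C_ne_zero 1), natDegree_X, natDegree_X_sub_C]
          have hX0 : (X * (X - 1) : K[X]) ≠ 0 := fun h => by simp [h] at hX
          have h2 : (P * (P - Q)).natDegree ≤ 2 * (Q.natDegree + 1) := by
            refine natDegree_mul_le.trans ?_
            have := natDegree_sub_le P Q
            rw [hdeg, max_eq_left (Nat.le_succ _)] at this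
            omega
          rw [hS, natDegree_mul hX0 hS0, hX] at h2
          omega
        rw [hdP, degree_wronskian_of_natDegree_eq_succ hdeg hQ]
        refine degree_le_natDegree.trans_lt ?_
        have : (S * Q).natDegree ≤ S.natDegree + Q.natDegree := natDegree_mul_le
        exact_mod_cast (by omega : (S * Q).natDegree < Q.natDegree + 1 + 2 * Q.natDegree)
      · refine (degree_sum_le _ _).trans_lt ((Finset.sup_lt_iff ?_).2 fun j _ => ?_)
        · rw [bot_lt_iff_ne_bot, ← degree_mul, Ne, degree_eq_bot]
          exact mul_ne_zero hP hW
        · rw [← hWU j, mul_assoc _ Q, mul_assoc, ← smul_eq_C_mul]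
          refine (degree_smul_le _ _).trans_lt ?_
          rw [show D j * (Q * (b * V j)) = D j * (b * V j) * Q by ring, degree_mul, degree_mul,
            add_comm P.degree, degree_mul (p := w j)]
          have hU : (b * V j).degree ≠ ⊥ := fun h =>
            hW (by rw [← hWU j, degree_eq_bot.1 h, mul_zero])
          exact (WithBot.add_lt_add_right (degree_eq_bot.not.2 hQ)
            (WithBot.add_lt_add_right hU (hDdeg j))).trans_le (add_le_add le_rfl hQP.le)
    rw [degree_mul] at hEW
    exact lt_of_add_lt_add_right hEW
  · rw [degree_mul, ← hdH j, hH j, degree_mul]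
    refine WithBot.add_lt_add_right ?_ (hDdeg j)
    rw [Ne, degree_eq_bot]
    intro h
    have := hdH j
    rw [hH j, h, mul_zero, degree_zero] at this
    exact hP (degree_eq_bot.1 this.symm)

end Polynomial

/-- The derivative of `P / Q` away from the poles, in terms of the Wronskian. -/
lemma deriv_eval_div_eval {P Q : ℂ[X]} {y : ℂ} (hy : Q.eval y ≠ 0) :
    deriv (fun z => P.eval z / Q.eval z) y = (wronskian Q P).eval y / Q.eval y ^ 2 := by
  have := ((P.hasDerivAt y).fun_div (Q.hasDerivAt y) hy).deriv
  rw [this, wronskian, eval_sub, eval_mul, eval_mul]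
  ring

/-- For a rational map `f = P/Q` of degree `d ≥ 2` normalized so that
`0, 1, ∞` are non-critical fixed points, with kernels `ψ_w(u) = w(w−1)/(u(u−1)(u−w))`,
there exist rational functions `L j` such that
`Σ_{y : f(y)=x} ψ_z(y)/(f'(y))² = (1/f'(z))·ψ_{f(z)}(x) + Σ_j L j z·ψ_{v j}(x)`. -/
theorem stmt1 (P Q : Polynomial ℂ) (hcop : IsCoprime P Q)
    (hdeg : P.natDegree = Q.natDegree + 1) (hdeg2 : 2 ≤ P.natDegree)
    (f : ℂ → ℂ) (hf : f = fun z => P.eval z / Q.eval z)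
    (h0 : P.eval 0 = 0) (hQ0 : Q.eval 0 ≠ 0)
    (h1 : P.eval 1 = Q.eval 1) (hQ1 : Q.eval 1 ≠ 0)
    (hd0 : deriv f 0 ≠ 0) (hd1 : deriv f 1 ≠ 0)
    (p : ℕ) (v : Fin p → ℂ) (hv_inj : Function.Injective v)
    (hv_range : Set.range v =
      {w : ℂ | ∃ c : ℂ, Q.eval c ≠ 0 ∧ deriv f c = 0 ∧ f c = w})
    (ψ : ℂ → ℂ → ℂ)
    (hψ : ψ = fun w u => (w * (w - 1)) / (u * (u - 1) * (u - w))) :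
    ∃ L : Fin p → ℂ → ℂ,
      (∀ j : Fin p, ∃ A B : Polynomial ℂ, B ≠ 0 ∧
        ∀ z : ℂ, B.eval z ≠ 0 → L j z = A.eval z / B.eval z) ∧
      ∀ z : ℂ, Q.eval z ≠ 0 → deriv f z ≠ 0 →
        ∀ x : ℂ, x ≠ 0 → x ≠ 1 → x ≠ f z → (∀ j : Fin p, x ≠ v j) →
          ∑ᶠ y ∈ {y : ℂ | P.eval y = x * Q.eval y}, ψ z y / (deriv f y) ^ 2 =
            (1 / deriv f z) * ψ (f z) x + ∑ j : Fin p, L j z * ψ (v j) x := by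
  classical
  have hfd : ∀ y, Q.eval y ≠ 0 → deriv f y = (wronskian Q P).eval y / Q.eval y ^ 2 := by
    intro y hy
    rw [hf, deriv_eval_div_eval hy]
  have hWne : ∀ y, Q.eval y ≠ 0 → deriv f y ≠ 0 → (wronskian Q P).eval y ≠ 0 := by
    intro y hy hd h
    exact hd (by rw [hfd y hy, h, zero_div])
  have hP : P ≠ 0 := by rintro rfl; simp at hdeg
  have hv : ∀ c, Q.eval c ≠ 0 → (wronskian Q P).eval c = 0 →
      ∃ j, P.eval c = v j * Q.eval c := by
    intro c hc hWc
    have hmem : f c ∈ Set.range v := by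
      rw [hv_range]
      exact ⟨c, hc, by rw [hfd c hc, hWc, zero_div], rfl⟩
    obtain ⟨j, hj⟩ := hmem
    refine ⟨j, ?_⟩
    rw [hj, hf]
    field_simp
  obtain ⟨S, E, w, U, H, D, hS, hwU, hwH, hEdeg, hDdeg, hSQ⟩ :=
    exists_partialFraction_wronskian hcop hdeg h0 h1 (hWne 0 hQ0 hd0) (hWne 1 hQ1 hd1) hv_inj hv
  have hW : wronskian Q P ≠ 0 := fun h => hWne 0 hQ0 hd0 (by simp [h])
  refine ⟨fun j z => (X * (1 - X) * D j).eval z / (w j).eval z, fun j =>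
    ⟨X * (1 - X) * D j, w j, fun h => hW (by rw [← hwU j, h, zero_mul]), fun z _ => rfl⟩, ?_⟩
  intro z hQz hdz x hx0 hx1 hxz hxv
  have hWz := hWne z hQz hdz
  have hxvj : ∀ j, x - v j ≠ 0 := fun j => sub_ne_zero.2 (hxv j)
  have hx1' : x - 1 ≠ 0 := sub_ne_zero.2 hx1
  have hS' : ∀ y, y * (y - 1) * S.eval y = P.eval y * (P.eval y - Q.eval y) := fun y => by
    simpa using congrArg (eval y) hS
  have hwU' : ∀ y j, (w j).eval y * (U j).eval y = (wronskian Q P).eval y := fun y j => by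
    simpa using congrArg (eval y) (hwU j)
  have hwH' : ∀ y j, (w j).eval y * (H j).eval y = P.eval y - v j * Q.eval y := fun y j => by
    simpa using congrArg (eval y) (hwH j)
  have hSQ' : ∀ y, S.eval y * Q.eval y = E.eval y * (wronskian Q P).eval y +
      ∑ j, v j * (v j - 1) * (D j).eval y * Q.eval y * (U j).eval y := fun y => by
    simpa [eval_finsetSum] using congrArg (eval y) hSQ
  set T : ℂ[X] := P - C x * Q with hTdef
  have hTdeg : T.degree = P.degree := by
    refine degree_sub_eq_left_of_degree_lt (lt_of_le_of_lt (b := Q.degree) ?_ ?_)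
    · rw [← smul_eq_C_mul]
      exact degree_smul_le _ _
    · exact degree_lt_degree (by omega)
  have hT0 : T ≠ 0 := by
    intro h
    rw [h, degree_zero] at hTdeg
    exact hP (degree_eq_bot.1 hTdeg.symm)
  have hroot : ∀ y, y ∈ T.roots ↔ P.eval y = x * Q.eval y := fun y => by
    rw [mem_roots hT0, IsRoot, hTdef, eval_sub, eval_mul, eval_C, sub_eq_zero]
  have hQy : ∀ y ∈ T.roots, Q.eval y ≠ 0 := by
    intro y hy h
    have hPy := (hroot y).1 hy
    rw [h, mul_zero] at hPy
    obtain ⟨a, b, hab⟩ := hcop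
    simpa [hPy, h] using congrArg (eval y) hab
  have hWy : ∀ y ∈ T.roots, (wronskian Q P).eval y ≠ 0 := by
    intro y hy h
    obtain ⟨j, hj⟩ := hv y (hQy y hy) h
    rw [(hroot y).1 hy] at hj
    exact hxv j (mul_right_cancel₀ (hQy y hy) hj)
  have hTW : ∀ y ∈ T.roots, Q.eval y * (derivative T).eval y = (wronskian Q P).eval y := by
    intro y hy
    simp only [hTdef, wronskian, derivative_sub, derivative_C_mul, eval_sub, eval_mul, eval_C,
      (hroot y).1 hy]
    ring
  have hT' : ∀ y ∈ T.roots, (derivative T).eval y ≠ 0 := fun y hy h =>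
    hWy y hy (by rw [← hTW y hy, h, mul_zero])
  have hTz : T.eval z = Q.eval z * (f z - x) := by
    rw [hf, hTdef, eval_sub, eval_mul, eval_C]
    field_simp
  have hfz : f z - x ≠ 0 := sub_ne_zero.2 (Ne.symm hxz)
  set G : ℂ[X] := E + ∑ j, C (v j * (v j - 1) / (x - v j)) * (D j * H j) with hGdef
  have hGdeg : G.degree < T.degree := by
    rw [hTdeg]
    refine (degree_add_le _ _).trans_lt (max_lt hEdeg ?_)
    refine (degree_sum_le _ _).trans_lt ((Finset.sup_lt_iff ?_).2 fun j _ => ?_)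
    · rw [bot_lt_iff_ne_bot, Ne, degree_eq_bot]
      exact hP
    · rw [← smul_eq_C_mul]
      exact (degree_smul_le _ _).trans_lt (hDdeg j)
  have hGeval : ∀ y, G.eval y = E.eval y +
      ∑ j, v j * (v j - 1) / (x - v j) * ((D j).eval y * (H j).eval y) := fun y => by
    simp [hGdef, eval_finsetSum]
  have hGy : ∀ y ∈ T.roots, S.eval y * Q.eval y = (wronskian Q P).eval y * G.eval y := by
    intro y hy
    rw [hSQ', hGeval, mul_add, Finset.mul_sum, mul_comm (E.eval y)]
    congr 1
    refine Finset.sum_congr rfl fun j _ => ?_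
    have hxj := hxvj j
    have h := hwH' y j
    rw [(hroot y).1 hy] at h
    rw [← hwU' y j]
    field_simp
    linear_combination (-v j * (v j - 1) * (D j).eval y * (U j).eval y) * h
  have hterm : ∀ y ∈ T.roots.toFinset, ψ z y / (deriv f y) ^ 2 =
      -(z * (z - 1) / (x * (x - 1))) * (G.eval y / ((z - y) * (derivative T).eval y)) := by
    intro y hy
    rw [Multiset.mem_toFinset] at hy
    have hQy' := hQy y hy
    have hWy' := hWy y hy
    have hTy := hT' y hy
    have hPy := (hroot y).1 hy
    have hy0 : y ≠ 0 := by
      rintro rfl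
      rw [h0] at hPy
      exact mul_ne_zero hx0 hQ0 hPy.symm
    have hy1 : y - 1 ≠ 0 := by
      refine sub_ne_zero.2 ?_
      rintro rfl
      rw [h1] at hPy
      exact hx1 (mul_right_cancel₀ hQ1 (by rw [one_mul, ← hPy]))
    have hyz : y - z ≠ 0 := by
      refine sub_ne_zero.2 ?_
      rintro rfl
      refine hxz ?_
      rw [hf]
      field_simp
      exact hPy.symm
    have hzy : z - y ≠ 0 := by rw [← neg_sub]; exact neg_ne_zero.2 hyz
    have hG : G.eval y = S.eval y * Q.eval y / (wronskian Q P).eval y := by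
      rw [eq_div_iff hWy', hGy y hy, mul_comm]
    have hSy : S.eval y = x * (x - 1) * Q.eval y ^ 2 / (y * (y - 1)) := by
      rw [eq_div_iff (mul_ne_zero hy0 hy1)]
      have := hS' y
      rw [hPy] at this
      linear_combination this
    rw [hG, hSy, hfd y hQy', hψ, ← hTW y hy, ← neg_sub y z]
    field_simp
  have hset : {y : ℂ | P.eval y = x * Q.eval y} = (T.roots.toFinset : Set ℂ) := by
    ext y
    simp only [Set.mem_ofPred_eq, Finset.mem_coe, Multiset.mem_toFinset, hroot]
  rw [hset, finsum_mem_coe_finset, Finset.sum_congr rfl hterm, ← Finset.mul_sum,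
    sum_roots_eval_div_eq hT' hGdeg (by rw [hTz]; exact mul_ne_zero hQz hfz), hTz]
  have hEz : E.eval z = S.eval z * Q.eval z / (wronskian Q P).eval z -
      ∑ j, v j * (v j - 1) * (D j).eval z * Q.eval z / (w j).eval z := by
    rw [eq_sub_iff_add_eq, eq_div_iff hWz, hSQ' z, add_mul, Finset.sum_mul]
    congr 1
    refine Finset.sum_congr rfl fun j _ => ?_
    have hwj : (w j).eval z ≠ 0 := fun h => hWz (by rw [← hwU' z j, h, zero_mul])
    rw [← hwU' z j]
    field_simp
  have hPz : P.eval z = f z * Q.eval z := by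
    rw [hf]
    field_simp
  have hGz : G.eval z = Q.eval z * (S.eval z / (wronskian Q P).eval z +
      (f z - x) * ∑ j, v j * (v j - 1) * (D j).eval z / ((w j).eval z * (x - v j))) := by
    rw [hGeval, hEz, mul_add, Finset.mul_sum, Finset.mul_sum, sub_add, ← Finset.sum_sub_distrib,
      sub_eq_add_neg, ← Finset.sum_neg_distrib]
    congr 1
    · ring
    refine Finset.sum_congr rfl fun j _ => ?_
    have hwj : (w j).eval z ≠ 0 := fun h => hWz (by rw [← hwU' z j, h, zero_mul])
    have hxj := hxvj j
    have hHj : (H j).eval z = (f z - v j) * Q.eval z / (w j).eval z := by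
      rw [eq_div_iff hwj, mul_comm, hwH', hPz]
      ring
    rw [hHj]
    field_simp
    ring
  have hSz := hS' z
  rw [hPz] at hSz
  have hLsum : ∑ j, (X * (1 - X) * D j).eval z / (w j).eval z * ψ (v j) x =
      -(z * (z - 1) / (x * (x - 1))) *
        ∑ j, v j * (v j - 1) * (D j).eval z / ((w j).eval z * (x - v j)) := by
    rw [Finset.mul_sum]
    refine Finset.sum_congr rfl fun j _ => ?_
    have hwj : (w j).eval z ≠ 0 := fun h => hWz (by rw [← hwU' z j, h, zero_mul])
    have hxj := hxvj j
    simp only [hψ, eval_mul, eval_X, eval_sub, eval_one]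
    field_simp
    ring
  rw [hLsum, hGz, hfd z hQz, hψ]
  have hxf : x - f z ≠ 0 := sub_ne_zero.2 hxz
  generalize ∑ j, v j * (v j - 1) * (D j).eval z / ((w j).eval z * (x - v j)) = R
  rw [← neg_sub x (f z)]
  field_simp
  linear_combination hSz

end
end

section
/- Let U ⊆ ℂ be a nonempty open connected set, Φ : U → ℂ holomorphic on U, and Y ⊆ U a Lebesgue-measurable set of positive area such that Φ(z) is a positive real number for every z ∈ Y. Then Φ is constant on U; in particular there is κ > 0 with Φ(z) = κ for all z ∈ U. -/
open MeasureTheory Filter Topology Set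

noncomputable section

theorem Complex.volume_setOf_im_eq_zero : volume {z : ℂ | z.im = 0} = 0 := by
  have hne : LinearMap.ker Complex.imLm ≠ ⊤ := fun h ↦ by
    have hI : Complex.I ∈ LinearMap.ker Complex.imLm := h ▸ Submodule.mem_top
    simp at hI
  exact Measure.addHaar_submodule volume _ hne

/-- Near a point where its derivative does not vanish, an analytic function pulls back null sets
to null sets. -/
theorem AnalyticAt.exists_mem_nhds_volume_inter_preimage_eq_zero {f : ℂ → ℂ} {a : ℂ}
    (hf : AnalyticAt ℂ f a) (ha : deriv f a ≠ 0) {N : Set ℂ} (hN : volume N = 0) :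
    ∃ V ∈ 𝓝 a, volume (V ∩ f ⁻¹' N) = 0 := by
  let g := hf.hasStrictDerivAt.localInverse f (deriv f a) a ha
  have hg : ∀ᶠ x in 𝓝 a, g (f x) = x := hf.hasStrictDerivAt.eventually_left_inverse ha
  have hgood : ∀ᶠ x in 𝓝 a, g (f x) = x ∧ DifferentiableAt ℝ g (f x) := by
    filter_upwards [hg.eventually_nhds, hf.eventually_analyticAt,
      hf.deriv.continuousAt.eventually_ne ha] with x hx hfx hdx
    exact ⟨hx.self_of_nhds, (hfx.hasStrictDerivAt.to_local_left_inverse hdx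
      hx).hasDerivAt.differentiableAt.restrictScalars ℝ⟩
  refine ⟨_, hgood, ?_⟩
  set E := {x | g (f x) = x ∧ DifferentiableAt ℝ g (f x)} ∩ f ⁻¹' N
  have himage : volume (f '' E) = 0 :=
    measure_mono_null (image_subset_iff.2 inter_subset_right) hN
  have hdiff : DifferentiableOn ℝ g (f '' E) := by
    rintro _ ⟨x, hx, rfl⟩
    exact hx.1.2.differentiableWithinAt
  refine measure_mono_null (fun x hx ↦ ?_)
    (addHaar_image_eq_zero_of_differentiableOn_of_addHaar_eq_zero volume hdiff himage)
  exact ⟨f x, mem_image_of_mem f hx, hx.1.1⟩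

/-- A holomorphic function on an open preconnected set is constant as soon as it maps a set of
positive area into a null set. -/
theorem Complex.exists_eq_const_of_volume_inter_preimage_ne_zero {f : ℂ → ℂ} {U N : Set ℂ}
    (hf : DifferentiableOn ℂ f U) (hU : IsOpen U) (hUc : IsPreconnected U)
    (hN : volume N = 0) (hpos : volume (U ∩ f ⁻¹' N) ≠ 0) :
    ∃ c, ∀ z ∈ U, f z = c := by
  have hfa : AnalyticOnNhd ℂ f U := hf.analyticOnNhd hU
  rcases hfa.deriv.eqOn_zero_or_eventually_ne_zero_of_preconnected hUc with h | h
  · exact hU.exists_is_const_of_deriv_eq_zero hUc hf h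
  refine absurd ?_ hpos
  have hcrit : volume (U ∩ {z | deriv f z = 0}) = 0 := by
    have hae := (ae_restrict_iff' hU.measurableSet).1
      (ae_restrict_le_codiscreteWithin (μ := volume) hU.measurableSet h)
    refine measure_mono_null (fun z hz ↦ ?_) (ae_iff.1 hae)
    exact fun hne ↦ hne hz.1 hz.2
  have hreg : volume (U ∩ f ⁻¹' N ∩ {z | deriv f z ≠ 0}) = 0 := by
    refine measure_null_of_locally_null _ fun z hz ↦ ?_
    obtain ⟨V, hV, hV0⟩ :=
      (hfa z hz.1.1).exists_mem_nhds_volume_inter_preimage_eq_zero hz.2 hN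
    exact ⟨V ∩ (U ∩ f ⁻¹' N ∩ {z | deriv f z ≠ 0}),
      inter_mem (mem_nhdsWithin_of_mem_nhds hV) self_mem_nhdsWithin,
      measure_mono_null (inter_subset_inter_right V fun _ hx ↦ hx.1.2) hV0⟩
  refine measure_mono_null (fun z hz ↦ ?_) (measure_union_null hcrit hreg)
  by_cases hd : deriv f z = 0
  exacts [Or.inl ⟨hz.1, hd⟩, Or.inr ⟨hz, hd⟩]

/-- a holomorphic function on a nonempty open connected set which takes
positive real values on a set of positive area is a positive real constant. -/
theorem stmt15 (U : Set ℂ) (hUopen : IsOpen U) (hUconn : IsConnected U)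
    (Φ : ℂ → ℂ) (hΦ : DifferentiableOn ℂ Φ U)
    (Y : Set ℂ) (hYmeas : MeasurableSet Y) (hYU : Y ⊆ U)
    (hYpos : 0 < volume Y)
    (hval : ∀ z ∈ Y, (Φ z).im = 0 ∧ 0 < (Φ z).re) :
    ∃ κ : ℝ, 0 < κ ∧ ∀ z ∈ U, Φ z = (κ : ℂ) := by
  obtain ⟨c, hc⟩ := Complex.exists_eq_const_of_volume_inter_preimage_ne_zero hΦ hUopen
    hUconn.isPreconnected Complex.volume_setOf_im_eq_zero
    (hYpos.trans_le (measure_mono (subset_inter hYU fun z hz ↦ (hval z hz).1))).ne'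
  obtain ⟨y, hy⟩ := nonempty_of_measure_ne_zero hYpos.ne'
  have hcy := hval y hy
  rw [hc y (hYU hy)] at hcy
  exact ⟨c.re, hcy.2, fun z hz ↦ (hc z hz).trans (Complex.ext rfl hcy.1)⟩

end
end
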